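/- Every downward closed generalised atom is expressible in TeamLTL(⩔, A¹): for every n ≥ 1, every set B ⊆ 𝒫({0,1}ⁿ) of n-ary Boolean relations that is downward closed (S ∈ B whenever S ⊆ R for some R ∈ B), and all propositional formulas α₁,…,αₙ over AP, there exists a formula ψ of TeamLTL extended with ⩔ and A¹ (without NE) such that for every team T = (t_i)_{i∈ι} and every tef τ for ι: (T,τ) ⊨ ψ if and only if { (⟦α₁⟧_{(t_i,τ(0)(i))}, …, ⟦αₙ⟧_{(t_i,τ(0)(i))}) : i ∈ ι } ∈ B. -/

import Mathlib

/-!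
Write `α^⊤ = α` and `α^⊥ = ¬α`. Propositional formulas in negation normal form are flat, so for
every relation `R` the formula `⋁ a ∈ R, ⋀ j, (α j)^(a j)` says that every truth vector of the team
lies in `R`. If `B` is downward closed, the set of truth vectors belongs to `B` exactly when it is
contained in some `R ∈ B`, and the Boolean disjunction `⩔` of these formulas over the finitely many
`R ∈ B` says this. The empty team satisfies every `NE`-free formula, even when `B` is empty, and has
to be set apart.
-/

namespace TTS

abbrev Trace (AP : Type) := ℕ → Set AP

def IsStutTef {ι : Type} (τ : ℕ → ι → ℕ) : Prop :=
  ∀ n i, τ n i ≤ τ (n + 1) i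

def IsTef {ι : Type} (τ : ℕ → ι → ℕ) : Prop :=
  IsStutTef τ ∧ (∀ n, τ n ≠ τ (n + 1)) ∧ (∀ n i, τ (n + 1) i ≤ τ n i + 1)

def Initial {ι : Type} (τ : ℕ → ι → ℕ) : Prop := ∀ i, τ 0 i = 0

def Fair {ι : Type} (τ : ℕ → ι → ℕ) : Prop :=
  ∀ (m : ℕ) (i : ι), ∃ n, m ≤ τ n i

def Synchronous {ι : Type} (τ : ℕ → ι → ℕ) : Prop :=
  ∀ n (i j : ι), τ n i = τ n j

def shift {ι : Type} (τ : ℕ → ι → ℕ) (k : ℕ) : ℕ → ι → ℕ := fun n => τ (n + k)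

/-- TeamLTL formulas extended with Boolean disjunction ⩔, the non-emptiness
atom NE, and the universal subteam quantifier A¹. -/
inductive EFormula (AP : Type) : Type
  | atom : AP → EFormula AP
  | natom : AP → EFormula AP
  | and : EFormula AP → EFormula AP → EFormula AP
  | or : EFormula AP → EFormula AP → EFormula AP
  | bor : EFormula AP → EFormula AP → EFormula AP
  | NE : EFormula AP
  | A1 : EFormula AP → EFormula AP
  | X : EFormula AP → EFormula AP
  | U : EFormula AP → EFormula AP → EFormula AP
  | W : EFormula AP → EFormula AP → EFormula AP

def esat {AP : Type} : {ι : Type} → (ι → Trace AP) → (ℕ → ι → ℕ) → EFormula AP → Prop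
  | _, T, τ, .atom p => ∀ i, p ∈ T i (τ 0 i)
  | _, T, τ, .natom p => ∀ i, p ∉ T i (τ 0 i)
  | _, T, τ, .and φ ψ => esat T τ φ ∧ esat T τ ψ
  | ι, T, τ, .or φ ψ =>
      ∃ P : ι → Prop,
        esat (fun i : {i // P i} => T i.1) (fun n i => τ n i.1) φ ∧
        esat (fun i : {i // ¬ P i} => T i.1) (fun n i => τ n i.1) ψ
  | _, T, τ, .bor φ ψ => esat T τ φ ∨ esat T τ ψ
  | ι, _, _, .NE => Nonempty ι
  | ι, T, τ, .A1 φ =>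
      ∀ i : ι, esat (fun j : {j // j = i} => T j.1) (fun n j => τ n j.1) φ
  | _, T, τ, .X φ => esat T (shift τ 1) φ
  | _, T, τ, .U φ ψ =>
      ∃ k, esat T (shift τ k) ψ ∧ ∀ m, m < k → esat T (shift τ m) φ
  | _, T, τ, .W φ ψ =>
      ∀ k, esat T (shift τ k) φ ∨ ∃ m, m ≤ k ∧ esat T (shift τ m) ψ

def esatE {AP ι : Type} (T : ι → Trace AP) (φ : EFormula AP) : Prop :=
  ∃ τ : ℕ → ι → ℕ, IsTef τ ∧ Initial τ ∧ esat T τ φ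

def esatA {AP ι : Type} (T : ι → Trace AP) (φ : EFormula AP) : Prop :=
  ∀ τ : ℕ → ι → ℕ, IsTef τ → Initial τ → esat T τ φ

def esatS {AP ι : Type} (T : ι → Trace AP) (φ : EFormula AP) : Prop :=
  esat T (fun n _ => n) φ

/-- Plain TeamLTL formulas (negation normal form, no extended connectives). -/
inductive Formula (AP : Type) : Type
  | atom : AP → Formula AP
  | natom : AP → Formula AP
  | and : Formula AP → Formula AP → Formula AP
  | or : Formula AP → Formula AP → Formula AP
  | X : Formula AP → Formula AP
  | U : Formula AP → Formula AP → Formula AP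
  | W : Formula AP → Formula AP → Formula AP

/-- Embedding of plain TeamLTL formulas into the extended syntax. -/
def Formula.toE {AP : Type} : Formula AP → EFormula AP
  | .atom p => .atom p
  | .natom p => .natom p
  | .and φ ψ => .and φ.toE ψ.toE
  | .or φ ψ => .or φ.toE ψ.toE
  | .X φ => .X φ.toE
  | .U φ ψ => .U φ.toE ψ.toE
  | .W φ ψ => .W φ.toE ψ.toE

def sat {AP ι : Type} (T : ι → Trace AP) (τ : ℕ → ι → ℕ) (φ : Formula AP) : Prop :=
  esat T τ φ.toE

def satE {AP ι : Type} (T : ι → Trace AP) (φ : Formula AP) : Prop :=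
  ∃ τ : ℕ → ι → ℕ, IsTef τ ∧ Initial τ ∧ sat T τ φ

def satA {AP ι : Type} (T : ι → Trace AP) (φ : Formula AP) : Prop :=
  ∀ τ : ℕ → ι → ℕ, IsTef τ → Initial τ → sat T τ φ

def satS {AP ι : Type} (T : ι → Trace AP) (φ : Formula AP) : Prop :=
  sat T (fun n _ => n) φ

/-- The team T_o over AP ∪ {o}: the fresh proposition o (here: none) is added
at exactly the even positions of every trace. -/
def addO {AP ι : Type} (T : ι → Trace AP) : ι → Trace (Option AP) :=
  fun i n => {x | (∃ p, x = some p ∧ p ∈ T i n) ∨ (x = none ∧ Even n)}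

/-- Mapping a plain formula along a renaming of atomic propositions. -/
def Formula.map {AP AP' : Type} (f : AP → AP') : Formula AP → Formula AP'
  | .atom p => .atom (f p)
  | .natom p => .natom (f p)
  | .and φ ψ => .and (φ.map f) (ψ.map f)
  | .or φ ψ => .or (φ.map f) (ψ.map f)
  | .X φ => .X (φ.map f)
  | .U φ ψ => .U (φ.map f) (ψ.map f)
  | .W φ ψ => .W (φ.map f) (ψ.map f)
/-- Propositional formulas over AP. -/
inductive PropForm (AP : Type) : Type
  | atom : AP → PropForm AP
  | not : PropForm AP → PropForm AP
  | and : PropForm AP → PropForm AP → PropForm AP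
  | or : PropForm AP → PropForm AP → PropForm AP

/-- Classical truth value of a propositional formula in a valuation. -/
def pval {AP : Type} (v : Set AP) : PropForm AP → Prop
  | .atom p => p ∈ v
  | .not φ => ¬ pval v φ
  | .and φ ψ => pval v φ ∧ pval v ψ
  | .or φ ψ => pval v φ ∨ pval v ψ

/-- The formula does not use the non-emptiness atom NE. -/
def NEFree {AP : Type} : EFormula AP → Prop
  | .atom _ => True
  | .natom _ => True
  | .and φ ψ => NEFree φ ∧ NEFree ψ
  | .or φ ψ => NEFree φ ∧ NEFree ψ
  | .bor φ ψ => NEFree φ ∧ NEFree ψ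
  | .NE => False
  | .A1 φ => NEFree φ
  | .X φ => NEFree φ
  | .U φ ψ => NEFree φ ∧ NEFree ψ
  | .W φ ψ => NEFree φ ∧ NEFree ψ

section Definability

variable {AP ι : Type}

/-- The set of valuations that the traces of the team show at the initial time point of `τ`. The
multiplicities of the team are forgotten. -/
def valuations (T : ι → Trace AP) (τ : ℕ → ι → ℕ) : Set (Set AP) :=
  Set.range fun i => T i (τ 0 i)

/-- A property of sets of valuations is team definable if some `NE`-free formula holds in exactly
those teams whose initial valuations have the property. The time evaluation `τ` is an arbitrary
function, not only a tef. -/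
def TeamDefinable (𝒞 : Set (Set (Set AP))) : Prop :=
  ∃ φ : EFormula AP, NEFree φ ∧
    ∀ (ι : Type) (T : ι → Trace AP) (τ : ℕ → ι → ℕ), esat T τ φ ↔ valuations T τ ∈ 𝒞

/-- A set of valuations is flatly definable if some `NE`-free formula says that every member of the
team currently has a valuation in the set. -/
def FlatlyDefinable (Q : Set (Set AP)) : Prop :=
  TeamDefinable Q.powerset

theorem valuations_mem_powerset {T : ι → Trace AP} {τ : ℕ → ι → ℕ} {Q : Set (Set AP)} :
    valuations T τ ∈ Q.powerset ↔ ∀ i, T i (τ 0 i) ∈ Q :=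
  Set.range_subset_iff

theorem TeamDefinable.union {𝒞 𝒟 : Set (Set (Set AP))} (h𝒞 : TeamDefinable 𝒞)
    (h𝒟 : TeamDefinable 𝒟) : TeamDefinable (𝒞 ∪ 𝒟) := by
  obtain ⟨φ, hφ, hφ𝒞⟩ := h𝒞
  obtain ⟨ψ, hψ, hψ𝒟⟩ := h𝒟
  exact ⟨.bor φ ψ, ⟨hφ, hψ⟩, fun ι T τ => or_congr (hφ𝒞 ι T τ) (hψ𝒟 ι T τ)⟩

theorem TeamDefinable.inter {𝒞 𝒟 : Set (Set (Set AP))} (h𝒞 : TeamDefinable 𝒞)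
    (h𝒟 : TeamDefinable 𝒟) : TeamDefinable (𝒞 ∩ 𝒟) := by
  obtain ⟨φ, hφ, hφ𝒞⟩ := h𝒞
  obtain ⟨ψ, hψ, hψ𝒟⟩ := h𝒟
  exact ⟨.and φ ψ, ⟨hφ, hψ⟩, fun ι T τ => and_congr (hφ𝒞 ι T τ) (hψ𝒟 ι T τ)⟩

namespace FlatlyDefinable

theorem setOf_mem (p : AP) : FlatlyDefinable {s : Set AP | p ∈ s} :=
  ⟨.atom p, trivial, fun _ _ _ => by simp only [esat, valuations_mem_powerset, Set.mem_ofPred_eq]⟩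

theorem setOf_notMem (p : AP) : FlatlyDefinable {s : Set AP | p ∉ s} :=
  ⟨.natom p, trivial, fun _ _ _ => by simp only [esat, valuations_mem_powerset, Set.mem_ofPred_eq]⟩

theorem inter {P Q : Set (Set AP)} (hP : FlatlyDefinable P) (hQ : FlatlyDefinable Q) :
    FlatlyDefinable (P ∩ Q) := by
  rw [FlatlyDefinable, Set.powerset_inter]
  exact TeamDefinable.inter hP hQ

theorem union {P Q : Set (Set AP)} (hP : FlatlyDefinable P) (hQ : FlatlyDefinable Q) :
    FlatlyDefinable (P ∪ Q) := by
  obtain ⟨φ, hφ, hφP⟩ := hP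
  obtain ⟨ψ, hψ, hψQ⟩ := hQ
  refine ⟨.or φ ψ, ⟨hφ, hψ⟩, fun ι T τ => ?_⟩
  simp only [esat, hφP, hψQ, valuations_mem_powerset]
  constructor
  · rintro ⟨left, hleft, hright⟩ i
    by_cases hi : left i
    · exact .inl (hleft ⟨i, hi⟩)
    · exact .inr (hright ⟨i, hi⟩)
  · exact fun h => ⟨fun i => T i (τ 0 i) ∈ P, fun i => i.2, fun i => (h i).resolve_left i.2⟩

theorem setOf_pval_and_compl (a : PropForm AP) :
    FlatlyDefinable {s | pval s a} ∧ FlatlyDefinable {s | pval s a}ᶜ := by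
  induction a with
  | atom p => exact ⟨setOf_mem p, setOf_notMem p⟩
  | not a iha => exact ⟨iha.2, (compl_compl {s | pval s a}).symm ▸ iha.1⟩
  | and a b iha ihb =>
    exact ⟨iha.1.inter ihb.1, Set.compl_inter {s | pval s a} {s | pval s b} ▸ iha.2.union ihb.2⟩
  | or a b iha ihb =>
    exact ⟨iha.1.union ihb.1, Set.compl_union {s | pval s a} {s | pval s b} ▸ iha.2.inter ihb.2⟩

theorem setOf_pval_iff (a : PropForm AP) (b : Prop) : FlatlyDefinable {s | pval s a ↔ b} := by
  by_cases hb : b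
  · simpa only [hb, iff_true] using (setOf_pval_and_compl a).1
  · simpa only [hb, iff_false, Set.compl_ofPred] using (setOf_pval_and_compl a).2

variable [Nonempty AP]

theorem univ : FlatlyDefinable (Set.univ : Set (Set AP)) := by
  obtain ⟨p⟩ := ‹Nonempty AP›
  exact Set.union_compl_self {s : Set AP | p ∈ s} ▸ (setOf_mem p).union (setOf_notMem p)

theorem empty : FlatlyDefinable (∅ : Set (Set AP)) := by
  obtain ⟨p⟩ := ‹Nonempty AP›
  exact Set.inter_compl_self {s : Set AP | p ∈ s} ▸ (setOf_mem p).inter (setOf_notMem p)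

theorem iInter {J : Type*} [Finite J] {Q : J → Set (Set AP)} (hQ : ∀ j, FlatlyDefinable (Q j)) :
    FlatlyDefinable (⋂ j, Q j) := by
  cases nonempty_fintype J
  rw [← Set.iInf_eq_iInter, ← Finset.inf_univ_eq_iInf]
  exact Finset.inf_induction univ (fun _ hP _ hR => hP.inter hR) fun j _ => hQ j

theorem iUnion {J : Type*} [Finite J] {Q : J → Set (Set AP)} (hQ : ∀ j, FlatlyDefinable (Q j)) :
    FlatlyDefinable (⋃ j, Q j) := by
  cases nonempty_fintype J
  rw [← Set.iSup_eq_iUnion, ← Finset.sup_univ_eq_iSup]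
  exact Finset.sup_induction empty (fun _ hP _ hR => hP.union hR) fun j _ => hQ j

/-- The term `{∅}` matters only for empty `J`, where the empty disjunction is a contradiction and
still holds in the empty team. -/
theorem teamDefinable_iUnion_powerset {J : Type*} [Finite J] {Q : J → Set (Set AP)}
    (hQ : ∀ j, FlatlyDefinable (Q j)) : TeamDefinable ({∅} ∪ ⋃ j, (Q j).powerset) := by
  have hempty : TeamDefinable ({∅} : Set (Set (Set AP))) := Set.powerset_empty ▸ empty
  cases nonempty_fintype J
  rw [← Set.iSup_eq_iUnion, ← Finset.sup_univ_eq_iSup]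
  refine Finset.sup_induction (p := fun 𝒞 => TeamDefinable ({∅} ∪ 𝒞)) ?_ ?_ ?_
  · simpa only [Set.bot_eq_empty, Set.union_empty] using hempty
  · intro 𝒞 h𝒞 𝒟 h𝒟
    change TeamDefinable ({∅} ∪ (𝒞 ∪ 𝒟))
    rw [Set.union_union_distrib_left]
    exact h𝒞.union h𝒟
  · exact fun j _ => hempty.union (hQ j)

end FlatlyDefinable

end Definability

section GeneralizedAtom

variable {AP ι : Type} {J : Type*}

/-- The tuple of truth values of the formulas `α j` in a valuation, that is
`(⟦α₁⟧, …, ⟦αₙ⟧)` when `J` is `Fin n`. -/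
def truthVector (α : J → PropForm AP) (s : Set AP) : J → Prop :=
  fun j => pval s (α j)

theorem truthVector_image_valuations (α : J → PropForm AP) (T : ι → Trace AP)
    (τ : ℕ → ι → ℕ) :
    truthVector α '' valuations T τ =
      {v : J → Prop | ∃ i : ι, v = fun j => pval (T i (τ 0 i)) (α j)} := by
  rw [valuations, ← Set.range_comp]
  exact Set.ext fun _ => exists_congr fun _ => eq_comm

theorem FlatlyDefinable.preimage_truthVector [Nonempty AP] [Finite J] (α : J → PropForm AP)
    (R : Set (J → Prop)) : FlatlyDefinable (truthVector α ⁻¹' R) := by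
  have hfiber (a : J → Prop) : truthVector α ⁻¹' {a} = ⋂ j, {s | pval s (α j) ↔ a j} := by
    ext s
    simp only [Set.mem_preimage, Set.mem_singleton_iff, funext_iff, truthVector, eq_iff_iff,
      Set.mem_iInter, Set.mem_ofPred_eq]
  rw [← Set.iUnion_of_singleton_coe R, Set.preimage_iUnion]
  exact .iUnion fun a => hfiber a ▸ .iInter fun j => .setOf_pval_iff (α j) (a.1 j)

theorem mem_iff_exists_mem_le {β : Type*} [Preorder β] {B : Set β} (hB : IsLowerSet B) {x : β} :
    x ∈ B ↔ ∃ y ∈ B, x ≤ y :=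
  ⟨fun hx => ⟨x, hx, le_rfl⟩, fun ⟨_, hy, hxy⟩ => hB hxy hy⟩

theorem downward_closed_generalized_atom_expressible_general [Nonempty AP] [Finite J]
    {B : Set (Set (J → Prop))} (hB : IsLowerSet B) (α : J → PropForm AP) :
    ∃ ψ : EFormula AP, NEFree ψ ∧
      ∀ (ι : Type) (T : ι → Trace AP) (τ : ℕ → ι → ℕ),
        esat T τ ψ ↔ IsEmpty ι ∨
          {v : J → Prop | ∃ i : ι, v = fun j => pval (T i (τ 0 i)) (α j)} ∈ B := by
  obtain ⟨ψ, hψ, h⟩ := FlatlyDefinable.teamDefinable_iUnion_powerset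
    fun R : B => FlatlyDefinable.preimage_truthVector α R.1
  refine ⟨ψ, hψ, fun ι T τ => ?_⟩
  calc esat T τ ψ
    _ ↔ valuations T τ = ∅ ∨ ∃ R ∈ B, valuations T τ ⊆ truthVector α ⁻¹' R := by
      simp only [h, Set.mem_union, Set.mem_singleton_iff, Set.mem_iUnion, Set.mem_powerset_iff,
        Subtype.exists, exists_prop]
    _ ↔ IsEmpty ι ∨ truthVector α '' valuations T τ ∈ B := by
      rw [mem_iff_exists_mem_le hB]
      simp only [Set.image_subset_iff, valuations, Set.range_eq_empty_iff]
    _ ↔ _ := by rw [truthVector_image_valuations]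

theorem PropForm.nonempty_atoms (a : PropForm AP) : Nonempty AP := by
  induction a with
  | atom p => exact ⟨p⟩
  | not _ ih => exact ih
  | and _ _ ih _ => exact ih
  | or _ _ ih _ => exact ih

theorem IsTef.nonempty {τ : ℕ → ι → ℕ} (hτ : IsTef τ) : Nonempty ι := by
  by_contra hι
  rw [not_nonempty_iff] at hι
  exact hτ.2.1 0 (Subsingleton.elim _ _)

end GeneralizedAtom

/-- Every downward closed generalised atom is expressible in TeamLTL(⩔, A¹),
without the non-emptiness atom NE. -/
theorem downward_closed_generalized_atom_expressible (AP : Type) (n : ℕ)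
    (hn : 1 ≤ n) (B : Set (Set (Fin n → Prop)))
    (hB : ∀ S R : Set (Fin n → Prop), S ⊆ R → R ∈ B → S ∈ B)
    (α : Fin n → PropForm AP) :
    ∃ ψ : EFormula AP, NEFree ψ ∧
      ∀ (ι : Type) (T : ι → Trace AP) (τ : ℕ → ι → ℕ), IsTef τ →
        (esat T τ ψ ↔
          {v : Fin n → Prop | ∃ i : ι, v = fun j => pval (T i (τ 0 i)) (α j)} ∈ B) := by
  have : Nonempty AP := (α ⟨0, hn⟩).nonempty_atoms
  obtain ⟨ψ, hψ, h⟩ :=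
    downward_closed_generalized_atom_expressible_general (fun R S => hB S R) α
  exact ⟨ψ, hψ, fun ι T τ hτ => (h ι T τ).trans (or_iff_right (not_isEmpty_iff.mpr hτ.nonempty))⟩

end TTS
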